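/- arXiv:1502.03184 — 5 statements merged into one kernel-verified Lean document; each statement's English description precedes it below -/
import Mathlib

section
/- Let f ∈ R be a homogeneous polynomial. Then for every integer e ≥ 1, the radical of the test ideal τ(f^{1−1/p^e}) equals the radical of the test ideal τ(f^{1−1/p}). (In particular, since the non-F-pure ideal σ(div(f)) equals τ(f^{1−1/p^e}) for all sufficiently large e, √τ(f^{1−1/p}) = √σ(div(f)).) -/
/-!
Write `q = p ^ e` and `R = k[x_0, …, x_n]`. As a module over itself through the `q`-th power map, `R`
is free: a basis is given by the products of a `k^q`-basis of `k` with the monomials whose exponents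
are all `< q`. The coordinate functions of this basis (`HasPowCoords`, `hasPowCoords_mvPolynomial`)
show that `h ∈ I^{[q]}` iff every coordinate of `h` lies in `I`
(`mem_bracketPow_iff`). Three consequences:

* `τ(f^{1-1/q}) ≤ a` iff `f^{q-1} ∈ a^{[q]}` (`testIdeal_le_iff`);
* for `P` prime, `P^{[q]}` is `P`-primary (`mem_bracketPow_of_mul_mem`);
* `g^q * h ∈ (I^{[p]})^{[q]}` iff `g` times each coordinate of `h` lies in `I^{[p]}`.

A radical is the intersection of the primes above the ideal, so it suffices that, for `P` prime,
`f^{q-1} ∈ P^{[q]}` iff `f^{p-1} ∈ P^{[p]}`. This is Fedder's argument, by induction on `e`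
(`pow_mem_bracketPow_iff`): `f^{pq-1} = (f^{p-1})^q * f^{q-1}`, and if `f^{p-1} ∉ P^{[p]}` then
`(P^{[p]} : f^{p-1}) ≤ P`, so membership of `f^{pq-1}` in `P^{[pq]}` would put all coordinates of
`f^{q-1}` into `P`, that is `f^{q-1} ∈ P^{[q]}`.
-/


open MvPolynomial

noncomputable section

/-- `I^{[e]}`-style bracket power: the ideal generated by `q`-th powers of elements of `I`. -/
def bracketPow {A : Type*} [CommRing A] (I : Ideal A) (q : ℕ) : Ideal A :=
  Ideal.span ((fun u => u ^ q) '' (I : Set A))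

/-- The test ideal `τ(f^{1 - 1/p^e})`: the smallest ideal `a` with `f^{p^e - 1} ∈ a^{[e]}`. -/
def testIdeal {A : Type*} [CommRing A] (p : ℕ) (f : A) (e : ℕ) : Ideal A :=
  sInf {a : Ideal A | f ^ (p ^ e - 1) ∈ bracketPow a (p ^ e)}

/-- The homogeneous maximal ideal `m = (x_0, ..., x_n)`. -/
def mxI (k : Type*) [Field k] (n : ℕ) : Ideal (MvPolynomial (Fin (n + 1)) k) :=
  Ideal.span (Set.range (X : Fin (n + 1) → MvPolynomial (Fin (n + 1)) k))

/-- The set of degrees of homogeneous elements of `(m^{[e]} : τ) \ m^{[e]}`. -/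
def MeSet (k : Type*) [Field k] (n p : ℕ) (τ : Ideal (MvPolynomial (Fin (n + 1)) k))
    (e : ℕ) : Set ℕ :=
  {d : ℕ | ∃ g : MvPolynomial (Fin (n + 1)) k,
    g ∈ (bracketPow (mxI k n) (p ^ e)).colon τ ∧
    g ∉ bracketPow (mxI k n) (p ^ e) ∧ g.IsHomogeneous d}

/-- `M_e`: the minimal degree of a homogeneous element of `(m^{[e]} : τ) \ m^{[e]}`. -/
def Me (k : Type*) [Field k] (n p : ℕ) (τ : Ideal (MvPolynomial (Fin (n + 1)) k))
    (e : ℕ) : ℕ :=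
  sInf (MeSet k n p τ e)

/-- `e_0`: the least `e` with `τ ⊄ m^{[e]}`. -/
def e0 (k : Type*) [Field k] (n p : ℕ) (τ : Ideal (MvPolynomial (Fin (n + 1)) k)) : ℕ :=
  sInf {e : ℕ | ¬ τ ≤ bracketPow (mxI k n) (p ^ e)}

universe u v

/-- Coordinate functions for a basis `b` of the field `K` over `k` along `φ : k → K`. -/
lemma exists_field_coords {k : Type v} {K : Type u} [Field k] [Field K] (φ : k →+* K) :
    ∃ (ι : Type u) (b : ι → K) (c : K →+ (ι →₀ k)),
      (∀ u a, c (φ u * a) = u • c a) ∧ ∀ a, (c a).sum (fun i x => φ x * b i) = a := by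
  let _ := φ.toAlgebra
  let B := Module.Basis.ofVectorSpace k K
  refine ⟨_, B, B.repr.toLinearMap.toAddMonoidHom, fun u a => ?_, fun a => ?_⟩
  · have := B.repr.map_smul u a
    rw [Algebra.smul_def] at this
    exact this
  · have := B.linearCombination_repr a
    rw [Finsupp.linearCombination_apply] at this
    simp only [Algebra.smul_def] at this
    exact this

/-- `A`, as a module over itself through the `q`-th power map, has coordinate maps: additive maps
`T j` with `T j (u ^ q * h) = u * T j h`, and elements `b j`, such that every `h` is
`∑ j, T j h ^ q * b j` over a suitable finite set of indices. Uniqueness of such an expansion is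
not required. -/
def HasPowCoords (A : Type u) [CommRing A] (q : ℕ) : Prop :=
  ∃ (J : Type u) (b : J → A) (T : J → A →+ A),
    (∀ j u h, T j (u ^ q * h) = u * T j h) ∧
    ∀ h, ∃ S : Finset J, h = ∑ j ∈ S, T j h ^ q * b j

section Coordinates

variable {k : Type u} [Field k] {σ : Type} {ι : Type u}

/-- The exponent vector `⌊l / q⌋`. -/
def expDiv (q : ℕ) (l : σ →₀ ℕ) : σ →₀ ℕ := l.mapRange (· / q) (Nat.zero_div q)

/-- The exponent vector `l mod q`. -/
def expMod (q : ℕ) (l : σ →₀ ℕ) : σ →₀ ℕ := l.mapRange (· % q) (Nat.zero_mod q)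

/-- The additive map sending `a x^l` to `c(a)_i x^{⌊l / q⌋}` if `l ≡ r mod q`, and to `0`
otherwise: the coordinate of index `(i, r)` on the polynomial ring. -/
def polyCoord (q : ℕ) (c : k →+ (ι →₀ k)) (j : ι × (σ →₀ ℕ)) :
    MvPolynomial σ k →+ MvPolynomial σ k :=
  open Classical in
  (Finsupp.liftAddHom fun l : σ →₀ ℕ =>
    if expMod q l = j.2 then
      (monomial (expDiv q l)).toAddMonoidHom.comp ((Finsupp.applyAddHom j.1).comp c)
    else 0).comp (AddMonoidAlgebra.coeffAddEquiv (R := k) (M := σ →₀ ℕ)).toAddMonoidHom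

open Classical in
lemma polyCoord_monomial (q : ℕ) (c : k →+ (ι →₀ k)) (j : ι × (σ →₀ ℕ)) (l : σ →₀ ℕ) (a : k) :
    polyCoord q c j (monomial l a) =
      if expMod q l = j.2 then monomial (expDiv q l) (c a j.1) else 0 := by
  have h : (AddMonoidAlgebra.coeffAddEquiv (R := k) (M := σ →₀ ℕ)) (monomial l a) =
    Finsupp.single l a := rfl
  simp only [polyCoord, AddMonoidHom.comp_apply, AddEquiv.coe_toAddMonoidHom, h,
    Finsupp.liftAddHom_apply_single]
  split_ifs <;> rfl

/-- The polynomial ring over any field of characteristic `p` has coordinates for every power of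
Frobenius. -/
lemma hasPowCoords_mvPolynomial (σ : Type) (p : ℕ) [Fact p.Prime] [CharP k p] (e : ℕ) :
    HasPowCoords (MvPolynomial σ k) (p ^ e) := by
  classical
  have hq : 0 < p ^ e := pow_pos (Fact.out : p.Prime).pos e
  obtain ⟨ι, b, c, hc, hb⟩ := exists_field_coords (iterateFrobenius k p e)
  simp only [iterateFrobenius_def] at hc hb
  generalize hqe : p ^ e = q at *
  have hadd (x y : MvPolynomial σ k) : (x + y) ^ q = x ^ q + y ^ q := by
    rw [← hqe, add_pow_char_pow]
  have hdivmod (l : σ →₀ ℕ) : q • expDiv q l + expMod q l = l := by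
    ext i
    simp [expDiv, expMod, Nat.div_add_mod]
  refine ⟨ι × (σ →₀ ℕ), fun j => monomial j.2 (b j.1), polyCoord q c, fun j u h => ?_,
    fun h => ?_⟩
  · induction u using MvPolynomial.induction_on' with
    | add u v hu hv => rw [hadd, add_mul, map_add, hu, hv, add_mul]
    | monomial s t =>
      induction h using MvPolynomial.induction_on' with
      | add g h hg hh => rw [mul_add, map_add, hg, hh, map_add, mul_add]
      | monomial l a =>
        have hmod : expMod q (q • s + l) = expMod q l := by
          ext i
          simp [expMod]
        have hdiv : expDiv q (q • s + l) = s + expDiv q l := by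
          ext i
          simp [expDiv, Nat.mul_add_div hq]
        rw [monomial_pow, monomial_mul, polyCoord_monomial, polyCoord_monomial, hmod, hdiv, hc]
        split_ifs
        · simp [monomial_mul]
        · simp
  · -- The index set may be enlarged, which makes the claim additive in `h`.
    suffices H : ∃ S : Finset (ι × (σ →₀ ℕ)), ∀ S', S ⊆ S' →
        h = ∑ j ∈ S', polyCoord q c j h ^ q * monomial j.2 (b j.1) by
      obtain ⟨S, hS⟩ := H
      exact ⟨S, hS S subset_rfl⟩
    induction h using MvPolynomial.induction_on' with
    | monomial l a =>
      refine ⟨(c a).support ×ˢ {expMod q l}, fun S' hS' => ?_⟩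
      rw [← Finset.sum_subset hS']
      · rw [Finset.sum_product]
        simp only [Finset.sum_singleton, polyCoord_monomial, if_true, monomial_pow, monomial_mul,
          hdivmod]
        rw [← map_sum]
        conv_lhs => rw [← hb a]
        rfl
      · rintro ⟨i, r⟩ - hj
        rw [polyCoord_monomial]
        split_ifs with hr
        · have : c a i = 0 := by
            by_contra h0
            exact hj (by simpa [h0] using hr)
          simp [this, hq.ne']
        · simp [hq.ne']
    | add g h hg hh =>
      obtain ⟨S₁, h₁⟩ := hg
      obtain ⟨S₂, h₂⟩ := hh
      refine ⟨S₁ ∪ S₂, fun S' hS' => ?_⟩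
      conv_lhs => rw [h₁ S' (Finset.union_subset_left hS'), h₂ S' (Finset.union_subset_right hS')]
      rw [← Finset.sum_add_distrib]
      simp only [map_add, hadd, add_mul]

end Coordinates

section Abstract

variable {A : Type u} [CommRing A] {q : ℕ}

/-- `I^{[q]}` consists of the elements all of whose coordinates lie in `I`. -/
lemma mem_bracketPow_iff {J : Type u} {b : J → A} {T : J → A →+ A}
    (hT : ∀ j u h, T j (u ^ q * h) = u * T j h)
    (hb : ∀ h, ∃ S : Finset J, h = ∑ j ∈ S, T j h ^ q * b j) (I : Ideal A) (h : A) :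
    h ∈ bracketPow I q ↔ ∀ j, T j h ∈ I := by
  constructor
  · intro hh j
    -- Generalizing over a multiplier makes the span induction go through.
    suffices H : ∀ r, T j (r * h) ∈ I by simpa using H 1
    refine Submodule.span_induction (p := fun x _ => ∀ r, T j (r * x) ∈ I) ?_ ?_ ?_ ?_ hh
    · rintro _ ⟨u, hu, rfl⟩ r
      change T j (r * u ^ q) ∈ I
      rw [mul_comm, hT]
      exact I.mul_mem_right _ hu
    · simp
    · intro x y _ _ hx hy r
      rw [mul_add, map_add]
      exact I.add_mem (hx r) (hy r)
    · intro a x _ hx r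
      rw [smul_eq_mul, ← mul_assoc]
      exact hx _
  · intro hh
    obtain ⟨S, hS⟩ := hb h
    rw [hS]
    exact Ideal.sum_mem _ fun j _ => Ideal.mul_mem_right _ _
      (Ideal.subset_span ⟨_, hh j, rfl⟩)

lemma testIdeal_le_iff {p e : ℕ} (H : HasPowCoords A (p ^ e)) (f : A) (a : Ideal A) :
    testIdeal p f e ≤ a ↔ f ^ (p ^ e - 1) ∈ bracketPow a (p ^ e) := by
  obtain ⟨J, b, T, hT, hb⟩ := H
  refine ⟨fun h => ?_, fun h => sInf_le h⟩
  rw [mem_bracketPow_iff hT hb]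
  refine fun j => h ?_
  rw [testIdeal, Submodule.mem_sInf]
  intro c hc
  exact (mem_bracketPow_iff hT hb c _).1 hc j

/-- `P^{[q]}` is `P`-primary for `P` prime. -/
lemma mem_bracketPow_of_mul_mem (H : HasPowCoords A q) (hq : q ≠ 0) {P : Ideal A}
    (hP : P.IsPrime) {s h : A} (hs : s ∉ P) (hsh : s * h ∈ bracketPow P q) :
    h ∈ bracketPow P q := by
  obtain ⟨J, b, T, hT, hb⟩ := H
  have h1 : s ^ q * h ∈ bracketPow P q := by
    obtain ⟨m, rfl⟩ := Nat.exists_eq_succ_of_ne_zero hq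
    rw [pow_succ, mul_assoc]
    exact Ideal.mul_mem_left _ _ hsh
  rw [mem_bracketPow_iff hT hb] at h1 ⊢
  intro j
  have := h1 j
  rw [hT] at this
  exact (hP.mem_or_mem this).resolve_left hs

lemma bracketPow_bracketPow {p : ℕ} [Fact p.Prime] [CharP A p] (I : Ideal A) (e : ℕ) :
    bracketPow (bracketPow I p) (p ^ e) = bracketPow I (p ^ (e + 1)) := by
  apply le_antisymm
  · have h : bracketPow I p ≤ (bracketPow I (p ^ (e + 1))).comap (iterateFrobenius A p e) := by
      refine Ideal.span_le.2 ?_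
      rintro _ ⟨u, hu, rfl⟩
      refine Ideal.subset_span ⟨u, hu, ?_⟩
      simp only [iterateFrobenius_def, ← pow_mul, pow_succ']
    refine Ideal.span_le.2 ?_
    rintro _ ⟨u, hu, rfl⟩
    exact h hu
  · refine Ideal.span_le.2 ?_
    rintro _ ⟨u, hu, rfl⟩
    refine Ideal.subset_span ⟨u ^ p, Ideal.subset_span ⟨u, hu, rfl⟩, ?_⟩
    simp only [← pow_mul, pow_succ']

/-- Fedder's criterion for a prime `P` may be tested with any power of Frobenius. -/
lemma pow_mem_bracketPow_iff {p : ℕ} [Fact p.Prime] [CharP A p]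
    (H : ∀ e, HasPowCoords A (p ^ e)) (f : A) {P : Ideal A} (hP : P.IsPrime) {e : ℕ}
    (he : 1 ≤ e) :
    f ^ (p ^ e - 1) ∈ bracketPow P (p ^ e) ↔ f ^ (p - 1) ∈ bracketPow P p := by
  have hp : 0 < p := (Fact.out : p.Prime).pos
  induction e, he using Nat.le_induction with
  | base => rw [pow_one]
  | succ e he ih =>
    have hexp : p ^ (e + 1) - 1 = (p - 1) * p ^ e + (p ^ e - 1) := by
      have h1 : 0 < p ^ e := pow_pos hp e
      obtain ⟨m, rfl⟩ := Nat.exists_eq_succ_of_ne_zero hp.ne'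
      rw [Nat.succ_sub_one, pow_succ', Nat.succ_mul]
      omega
    obtain ⟨J, b, T, hT, hb⟩ := H e
    rw [← bracketPow_bracketPow, hexp, pow_add, pow_mul, mem_bracketPow_iff hT hb]
    simp only [hT]
    refine ⟨fun h => ?_, fun h j => Ideal.mul_mem_right _ _ h⟩
    by_contra hf
    refine hf (ih.1 ((mem_bracketPow_iff hT hb _ _).2 fun j => ?_))
    by_contra hj
    refine hf (mem_bracketPow_of_mul_mem ?_ hp.ne' hP hj (by rw [mul_comm]; exact h j))
    simpa using H 1

end Abstract

/-- For homogeneous `f` and every `e ≥ 1`,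
`√τ(f^{1−1/p^e}) = √τ(f^{1−1/p})`. -/
theorem radical_testIdeal_eq {k : Type*} [Field k] {p n : ℕ} [Fact p.Prime] [CharP k p]
    (f : MvPolynomial (Fin (n + 1)) k) (d : ℕ) (hf : f.IsHomogeneous d)
    (e : ℕ) (he : 1 ≤ e) :
    (testIdeal p f e).radical = (testIdeal p f 1).radical := by
  rw [Ideal.radical_eq_sInf, Ideal.radical_eq_sInf]
  congr 1
  ext P
  simp only [Set.mem_ofPred_eq]
  refine and_congr_left fun hP => ?_
  rw [testIdeal_le_iff (hasPowCoords_mvPolynomial _ p e),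
    testIdeal_le_iff (hasPowCoords_mvPolynomial _ p 1), pow_one,
    pow_mem_bracketPow_iff (hasPowCoords_mvPolynomial _ p) f hP he]

end
end

section
/- Let f ∈ R be homogeneous with τ = τ(f^{1−1/p}) ⊆ m (so that M_e < ∞ for all e ≥ e_0). Then for every e ≥ e_0 one has M_{e+1} − (n+1)p^{e+1} ≤ M_e − (n+1)p^e; that is, the sequence {M_e − (n+1)p^e}_{e ≥ e_0} is nonincreasing. -/
/-! Let `q = p ^ e` and `q' = p ^ (e + 1)`. Multiplication by `(x_0 ⋯ x_n) ^ (q' - q)` carries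
`m^{[e]}` into `m^{[e+1]}`, and elements outside `m^{[e]}` to elements outside `m^{[e+1]}`, because
both are monomial ideals (`mem_bracketPow_mxI`, `monomial_mul_mem_iff`). Hence it sends homogeneous
elements of `(m^{[e]} : τ) \ m^{[e]}` to homogeneous elements of `(m^{[e+1]} : τ) \ m^{[e+1]}`,
raising the degree by `(n + 1) (q' - q)` (`MeSet_add`). Applied to an element of degree `M_e`, which
exists since `τ ⊆ m` (`MeSet_nonempty`), this gives the inequality. -/


open MvPolynomial

noncomputable section

/-- In characteristic `p`, the ideal `m^{[e]}` is generated by the `x_i ^ (p ^ e)`, hence it is the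
monomial ideal described by exponents. -/
theorem mem_bracketPow_mxI {k : Type*} [Field k] {p n : ℕ} [Fact p.Prime] [CharP k p] (e : ℕ)
    (g : MvPolynomial (Fin (n + 1)) k) :
    g ∈ bracketPow (mxI k n) (p ^ e) ↔ ∀ s ∈ g.support, ∃ i, p ^ e ≤ s i := by
  have h1 : bracketPow (mxI k n) (p ^ e) =
      Ideal.span ((fun s => monomial s (1 : k)) ''
        Set.range (fun i : Fin (n + 1) => Finsupp.single i (p ^ e))) := by
    have h2 : bracketPow (mxI k n) (p ^ e) =
        Ideal.map (iterateFrobenius (MvPolynomial (Fin (n + 1)) k) p e) (mxI k n) := by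
      simp only [bracketPow, Ideal.map]
      congr 1
    rw [h2, mxI, Ideal.map_span, ← Set.range_comp, ← Set.range_comp]
    congr 2
    funext i
    simp [iterateFrobenius_def, X_pow_eq_monomial]
  rw [h1, mem_ideal_span_monomial_image]
  simp

/-- The exponent vector of `(x_0 ⋯ x_n) ^ c`. -/
def constExp (n c : ℕ) : Fin (n + 1) →₀ ℕ := Finsupp.equivFunOnFinite.symm fun _ => c

theorem constExp_apply (n c : ℕ) (i : Fin (n + 1)) : constExp n c i = c := rfl

theorem degree_constExp (n c : ℕ) : (constExp n c).degree = (n + 1) * c := by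
  simp [Finsupp.degree_eq_sum, constExp_apply]

/-- If `p ^ e + c = p ^ e'`, then `m^{[e']} : (x_0 ⋯ x_n) ^ c = m^{[e]}`. -/
theorem monomial_mul_mem_iff {k : Type*} [Field k] {p n : ℕ} [Fact p.Prime] [CharP k p]
    {e e' c : ℕ} (hc : p ^ e + c = p ^ e') (g : MvPolynomial (Fin (n + 1)) k) :
    monomial (constExp n c) (1 : k) * g ∈ bracketPow (mxI k n) (p ^ e') ↔
      g ∈ bracketPow (mxI k n) (p ^ e) := by
  rw [mem_bracketPow_mxI, mem_bracketPow_mxI]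
  constructor
  · intro h s hs
    obtain ⟨i, hi⟩ := h (constExp n c + s) (by
      rw [mem_support_iff, coeff_monomial_mul, one_mul]
      exact mem_support_iff.mp hs)
    rw [Finsupp.add_apply, constExp_apply] at hi
    exact ⟨i, by omega⟩
  · intro h s hs
    rw [mem_support_iff, coeff_monomial_mul'] at hs
    split_ifs at hs with hle
    · obtain ⟨i, hi⟩ := h (s - constExp n c) (by
        rw [mem_support_iff]
        simpa using hs)
      rw [Finsupp.tsub_apply, constExp_apply] at hi
      have := hle i
      rw [constExp_apply] at this
      exact ⟨i, by omega⟩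
    · exact absurd rfl hs

theorem MeSet_add {k : Type*} [Field k] {p n : ℕ} [Fact p.Prime] [CharP k p]
    {τ : Ideal (MvPolynomial (Fin (n + 1)) k)} {e e' c d : ℕ} (hc : p ^ e + c = p ^ e')
    (hd : d ∈ MeSet k n p τ e) : (n + 1) * c + d ∈ MeSet k n p τ e' := by
  obtain ⟨g, hg, hg', hd⟩ := hd
  refine ⟨monomial (constExp n c) 1 * g, ?_, ?_, ?_⟩
  · rw [Submodule.mem_colon] at hg ⊢
    intro t ht
    have := (monomial_mul_mem_iff hc (g * t)).mpr (hg t ht)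
    rwa [← mul_assoc] at this
  · rwa [monomial_mul_mem_iff hc]
  · exact (isHomogeneous_monomial _ (degree_constExp n c)).mul hd

/-- Since `τ ⊆ m`, the constant `1` lies in `(m^{[0]} : τ) \ m^{[0]}`; multiplying it by
`(x_0 ⋯ x_n) ^ (p ^ e - 1)` shows that `M_e` is finite. -/
theorem MeSet_nonempty {k : Type*} [Field k] {p n : ℕ} [Fact p.Prime] [CharP k p]
    {τ : Ideal (MvPolynomial (Fin (n + 1)) k)} (hτ : τ ≤ mxI k n) (e : ℕ) :
    (MeSet k n p τ e).Nonempty := by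
  have hp : 1 ≤ p ^ e := Nat.one_le_pow _ _ (Fact.out : p.Prime).pos
  have h0 : 0 ∈ MeSet k n p τ 0 := by
    refine ⟨1, ?_, ?_, isHomogeneous_one _ _⟩
    · rw [Submodule.mem_colon]
      intro t ht
      rw [smul_eq_mul, one_mul]
      exact Ideal.subset_span ⟨t, hτ ht, by simp⟩
    · rw [mem_bracketPow_mxI]
      intro h
      obtain ⟨i, hi⟩ := h 0 (by simp)
      simp at hi
  exact ⟨_, MeSet_add (c := p ^ e - 1) (by rw [pow_zero]; omega) h0⟩

/-- If `f` is homogeneous and `τ = τ(f^{1−1/p}) ⊆ m`, then for every `e ≥ e_0`,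
`M_{e+1} − (n+1)p^{e+1} ≤ M_e − (n+1)p^e`. -/
theorem Me_sub_nonincreasing {k : Type*} [Field k] {p n : ℕ} [Fact p.Prime] [CharP k p]
    (f : MvPolynomial (Fin (n + 1)) k) (d : ℕ) (hf : f.IsHomogeneous d)
    (hτ : testIdeal p f 1 ≤ mxI k n)
    (e : ℕ) (he : e0 k n p (testIdeal p f 1) ≤ e) :
    (Me k n p (testIdeal p f 1) (e + 1) : ℤ) - (n + 1) * p ^ (e + 1) ≤
      (Me k n p (testIdeal p f 1) e : ℤ) - (n + 1) * p ^ e := by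
  have hle : p ^ e ≤ p ^ (e + 1) :=
    Nat.pow_le_pow_right (Fact.out : p.Prime).pos (Nat.le_succ e)
  have h := Nat.sInf_le (MeSet_add (Nat.add_sub_cancel' hle) (Nat.sInf_mem (MeSet_nonempty hτ e)))
  change Me k n p _ (e + 1) ≤ _ + Me k n p _ e at h
  zify [hle] at h
  linarith

end
end

section
/- For every e ≥ 0, the colon ideal (m^{[e+1]} : (x_0⋯x_n)^{p^{e+1}−p^e}) equals m^{[e]}. -/
/-!
In characteristic `p` the `p^e`-th power map is additive, so `m^{[e]}` is the monomial ideal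
generated by the `x_i^{p^e}` (`bracketPow_mxI`). Membership in it is therefore a condition on
exponents: every monomial `x^a` of the polynomial has some `a_i ≥ p^e`
(`mem_bracketPow_mxI_iff`). Multiplication by `(x_0⋯x_n)^c` shifts every exponent by `c`, and for
`c = p^{e+1} - p^e` the condition `a_i + c ≥ p^{e+1}` is the condition `a_i ≥ p^e`.
-/

open MvPolynomial

noncomputable section

/-- Frobenius is additive, so the bracket power of `m` is generated by the powers of the
variables. -/
theorem bracketPow_mxI (k : Type*) [Field k] (n p : ℕ) [Fact p.Prime] [CharP k p] (e : ℕ) :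
    bracketPow (mxI k n) (p ^ e) =
      Ideal.span ((fun s => monomial s (1 : k)) ''
        Set.range (fun i : Fin (n + 1) => Finsupp.single i (p ^ e))) := by
  have hq : p ^ e ≠ 0 := pow_ne_zero _ (Fact.out : p.Prime).ne_zero
  apply le_antisymm
  · refine Ideal.span_le.2 ?_
    rintro _ ⟨u, hu, rfl⟩
    simp only [SetLike.mem_coe] at hu ⊢
    refine Submodule.span_induction (p := fun u _ => u ^ p ^ e ∈ _) ?_ ?_ ?_ ?_ hu
    · rintro _ ⟨i, rfl⟩
      refine Ideal.subset_span ⟨_, ⟨i, rfl⟩, ?_⟩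
      simp [X_pow_eq_monomial]
    · rw [zero_pow hq]
      exact Ideal.zero_mem _
    · intro x y _ _ hx hy
      rw [add_pow_char_pow]
      exact Ideal.add_mem _ hx hy
    · intro a x _ hx
      rw [smul_eq_mul, mul_pow]
      exact Ideal.mul_mem_left _ _ hx
  · refine Ideal.span_le.2 ?_
    rintro _ ⟨_, ⟨i, rfl⟩, rfl⟩
    refine Ideal.subset_span ⟨X i, Ideal.subset_span ⟨i, rfl⟩, ?_⟩
    simp [X_pow_eq_monomial]

theorem mem_bracketPow_mxI_iff {k : Type*} [Field k] {n p : ℕ} [Fact p.Prime] [CharP k p]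
    (e : ℕ) (g : MvPolynomial (Fin (n + 1)) k) :
    g ∈ bracketPow (mxI k n) (p ^ e) ↔ ∀ a, coeff a g ≠ 0 → ∃ i, p ^ e ≤ a i := by
  rw [bracketPow_mxI, mem_ideal_span_monomial_image]
  simp

theorem prod_X_pow_eq_monomial (k : Type*) [Field k] (n c : ℕ) :
    (∏ i, X i : MvPolynomial (Fin (n + 1)) k) ^ c =
      monomial (Finsupp.equivFunOnFinite.symm fun _ => c) 1 := by
  rw [monomial_eq, Finsupp.prod_fintype _ _ (by simp), ← Finset.prod_pow]
  simp

/-- For every `e ≥ 0`,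
`(m^{[e+1]} : (x_0⋯x_n)^{p^{e+1}−p^e}) = m^{[e]}`. -/
theorem colon_prod_pow_eq {k : Type*} [Field k] {p n : ℕ} [Fact p.Prime] [CharP k p]
    (e : ℕ) :
    (bracketPow (mxI k n) (p ^ (e + 1))).colon
        (Ideal.span {(∏ i, X i : MvPolynomial (Fin (n + 1)) k) ^ (p ^ (e + 1) - p ^ e)}) =
      bracketPow (mxI k n) (p ^ e) := by
  have hle : p ^ e ≤ p ^ (e + 1) := Nat.pow_le_pow_right (Fact.out : p.Prime).pos e.le_succ
  ext g
  rw [Ideal.span, Submodule.colon_span, Submodule.mem_colon_singleton, smul_eq_mul,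
    prod_X_pow_eq_monomial, mem_bracketPow_mxI_iff, mem_bracketPow_mxI_iff]
  constructor
  · intro h a ha
    obtain ⟨i, hi⟩ := h (a + Finsupp.equivFunOnFinite.symm fun _ => p ^ (e + 1) - p ^ e)
      (by rwa [coeff_mul_monomial, mul_one])
    refine ⟨i, ?_⟩
    simp only [Finsupp.add_apply, Finsupp.equivFunOnFinite_symm_apply_apply] at hi
    omega
  · intro h a ha
    rw [coeff_mul_monomial'] at ha
    split_ifs at ha with hs
    · obtain ⟨i, hi⟩ := h _ (left_ne_zero_of_mul ha)
      refine ⟨i, ?_⟩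
      have hsi := hs i
      simp only [Finsupp.tsub_apply, Finsupp.equivFunOnFinite_symm_apply_apply] at hi hsi
      omega
    · exact absurd rfl ha

end
end

section
/- Let f ∈ R and write τ = τ(f^{1−1/p}). Then for every g ∈ R and every e ≥ 0: f^{p−1}·g^p ∈ m^{[e+1]} if and only if g ∈ (m^{[e]} : τ). -/
/-!
Write `R = k[x_0, …, x_n]` and call an additive map `φ : R → R` *`p⁻¹`-linear* if
`φ (r ^ p * s) = r * φ s`. The field `k` is free over `k ^ p`, so `R` is free over `R ^ p`, with
basis the products `b_i xᵃ` of a basis of `k` over `k ^ p` and the monomials with all exponents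
below `p`; the coordinates are `p⁻¹`-linear maps (`cartier`). Hence, for every ideal `J`,
`s ∈ J^{[1]}` if and only if `φ s ∈ J` for all `p⁻¹`-linear `φ` (`mem_bracketPow_iff`). No
finiteness of `k` over `k ^ p` is needed, since each `s` has only finitely many nonzero coordinates.

It follows that `τ` is generated by the elements `φ (f ^ (p - 1))` (`testIdeal_one_eq`). As
`m^{[e+1]} = (m^{[e]})^{[1]}` and `φ (f ^ (p - 1) * g ^ p) = g * φ (f ^ (p - 1))`, both sides of the
theorem say that `g * φ (f ^ (p - 1)) ∈ m^{[e]}` for all `φ`.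
-/

open MvPolynomial

noncomputable section

/-- A ring hom out of a field makes the target a free module, expressed by a coordinate system:
the `π i` are coordinates with respect to the basis `b`. Source and target are kept as distinct
types so that the result can be applied to the Frobenius endomorphism of a field. -/
lemma exists_semilinear_coords.{u, v} {K : Type u} {L : Type v} [Field K] [Field L] (F : K →+* L) :
    ∃ (ι : Type v) (b : ι → L) (π : ι → L →+ K),
      (∀ i c d, π i (F c * d) = c * π i d) ∧
      ∀ d, ∃ T : Finset ι, ∀ T', T ⊆ T' → ∑ i ∈ T', F (π i d) * b i = d := by
  let := F.toAlgebra
  let b := Module.Basis.ofVectorSpace K L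
  refine ⟨_, b, fun i => (b.coord i).toAddMonoidHom, ?_, ?_⟩
  · intro i c d
    have : F c * d = c • d := (Algebra.smul_def c d).symm
    simp [this]
  · intro d
    refine ⟨(b.repr d).support, fun T' hT => ?_⟩
    have h := b.linearCombination_repr d
    rw [Finsupp.linearCombination_apply, Finsupp.sum_of_support_subset _ hT _ (by simp)] at h
    simpa [Algebra.smul_def, RingHom.algebraMap_toAlgebra] using h

/-- `p⁻¹`-linear (Cartier-type) maps: additive `φ` with `φ (r ^ p * s) = r * φ s`. -/
def IsCartier {A : Type*} [CommRing A] (p : ℕ) (φ : A →+ A) : Prop :=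
  ∀ r s, φ (r ^ p * s) = r * φ s

/-- `p⁻¹`-linear maps send `a^{[1]}` into `a`. -/
lemma IsCartier.mem {A : Type*} [CommRing A] {p : ℕ} {φ : A →+ A} (hφ : IsCartier p φ)
    {a : Ideal A} {s : A} (hs : s ∈ bracketPow a p) : φ s ∈ a := by
  suffices h : ∀ r, φ (s * r) ∈ a by simpa using h 1
  refine Submodule.span_induction (p := fun x _ => ∀ r, φ (x * r) ∈ a) ?_ ?_ ?_ ?_ hs
  · rintro _ ⟨u, hu, rfl⟩ r
    rw [hφ]
    exact a.mul_mem_right _ hu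
  · simp
  · intro x y _ _ hx hy r
    rw [add_mul, map_add]
    exact a.add_mem (hx r) (hy r)
  · intro c x _ hx r
    rw [smul_eq_mul, mul_comm c x, mul_assoc]
    exact hx _

section
variable {σ k : Type*} [Field k] {p : ℕ} [hp : Fact p.Prime]

variable (p) in
lemma smul_add_injective (a : σ →₀ ℕ) : Function.Injective fun m : σ →₀ ℕ => p • m + a := by
  intro x y h
  ext i
  have h' : p * x i + a i = p * y i + a i := DFunLike.congr_fun h i
  exact Nat.eq_of_mul_eq_mul_left hp.out.pos (Nat.add_right_cancel h')

variable (p) in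
/-- The polynomial `∑ₘ π (coeff (p m + a) s) xᵐ`, the value of `cartier p a π` at `s`. -/
def cartierFun (a : σ →₀ ℕ) (π : k →+ k) (s : MvPolynomial σ k) : MvPolynomial σ k :=
  ∑ m ∈ s.support.preimage _ (smul_add_injective p a).injOn, monomial m (π (coeff (p • m + a) s))

lemma coeff_cartierFun (a : σ →₀ ℕ) (π : k →+ k) (s : MvPolynomial σ k) (m : σ →₀ ℕ) :
    coeff m (cartierFun p a π s) = π (coeff (p • m + a) s) := by
  classical
  simp only [cartierFun, coeff_sum, coeff_monomial, Finset.sum_ite_eq', Finset.mem_preimage,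
    mem_support_iff]
  split_ifs with h
  · rfl
  · rw [not_not.1 h, map_zero]

variable (p) in
/-- The map `s ↦ ∑ₘ π (coeff (p m + a) s) xᵐ`. If all exponents in `a` are below `p`, it picks out
the part of `s` with exponents congruent to `a` modulo `p` and applies `π` to each coefficient. -/
def cartier (a : σ →₀ ℕ) (π : k →+ k) : MvPolynomial σ k →+ MvPolynomial σ k where
  toFun := cartierFun p a π
  map_zero' := by ext m; simp [coeff_cartierFun]
  map_add' s t := by ext m; simp [coeff_cartierFun]

lemma coeff_cartier (a : σ →₀ ℕ) (π : k →+ k) (s : MvPolynomial σ k) (m : σ →₀ ℕ) :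
    coeff m (cartier p a π s) = π (coeff (p • m + a) s) :=
  coeff_cartierFun a π s m

lemma isCartier_cartier [CharP k p] {a : σ →₀ ℕ} (ha : ∀ i, a i < p) {π : k →+ k}
    (hπ : ∀ c d, π (c ^ p * d) = c * π d) : IsCartier p (cartier (σ := σ) p a π) := by
  classical
  intro r s
  induction r using MvPolynomial.induction_on' with
  | monomial u c =>
    ext m
    rw [coeff_cartier, monomial_pow, coeff_monomial_mul', coeff_monomial_mul', coeff_cartier]
    have key : p • u ≤ p • m + a ↔ u ≤ m := by
      rw [Finsupp.le_def, Finsupp.le_def]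
      refine forall_congr' fun i => ?_
      simp only [Finsupp.smul_apply, Finsupp.add_apply, smul_eq_mul]
      constructor
      · intro h
        by_contra! hlt
        have h1 : p * (m i + 1) ≤ p * u i := Nat.mul_le_mul_left _ hlt
        have := ha i
        rw [mul_add] at h1
        omega
      · intro h
        exact (Nat.mul_le_mul_left _ h).trans (Nat.le_add_right _ _)
    by_cases h : u ≤ m
    · rw [if_pos (key.2 h), if_pos h, hπ]
      congr 3
      obtain ⟨v, rfl⟩ := exists_add_of_le h
      rw [smul_add, add_assoc, add_tsub_cancel_left, add_tsub_cancel_left]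
    · rw [if_neg (mt key.1 h), if_neg h, map_zero]
  | add x y hx hy =>
    rw [add_pow_char, add_mul, map_add, hx, hy, add_mul]

lemma cartier_monomial [DecidableEq σ] {a a' : σ →₀ ℕ} (ha : ∀ i, a i < p) (ha' : ∀ i, a' i < p)
    (π : k →+ k) (u : σ →₀ ℕ) (d : k) :
    cartier p a π (monomial (p • u + a') d) = if a = a' then monomial u (π d) else 0 := by
  ext m
  rw [coeff_cartier, coeff_monomial]
  have key : p • u + a' = p • m + a ↔ u = m ∧ a = a' := by
    constructor
    · intro h
      have h1 : ∀ i, u i = m i ∧ a i = a' i := by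
        intro i
        have hi : p * u i + a' i = p * m i + a i := by simpa using DFunLike.congr_fun h i
        have e1 := congrArg (· % p) hi
        have e2 := congrArg (· / p) hi
        simp only [Nat.mul_add_mod, Nat.mod_eq_of_lt (ha i), Nat.mod_eq_of_lt (ha' i),
          Nat.mul_add_div hp.out.pos, Nat.div_eq_of_lt (ha i), Nat.div_eq_of_lt (ha' i)] at e1 e2
        omega
      exact ⟨Finsupp.ext fun i => (h1 i).1, Finsupp.ext fun i => (h1 i).2⟩
    · rintro ⟨rfl, rfl⟩; rfl
  rw [if_congr key rfl rfl]
  by_cases h2 : a = a' <;> by_cases h1 : u = m <;> simp [h1, h2, coeff_monomial]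

/-- The coordinates of `s` determine it: `s = ∑ φ_{a,i}(s) ^ p * b_i xᵃ`, where `b` is a basis of
`k` over `k ^ p`, `a` runs over the exponent vectors with entries below `p`, and `φ_{a,i}` is
`cartier p a (π i)`. So if all `p⁻¹`-linear maps send `s` into `J`, then `s ∈ J^{[1]}`. -/
lemma mem_bracketPow_of_cartier [Finite σ] [CharP k p] {s : MvPolynomial σ k}
    {J : Ideal (MvPolynomial σ k)}
    (h : ∀ φ : MvPolynomial σ k →+ MvPolynomial σ k, IsCartier p φ → φ s ∈ J) :
    s ∈ bracketPow J p := by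
  classical
  have := Fintype.ofFinite σ
  obtain ⟨ι, b, π, hπ, hb⟩ := exists_semilinear_coords (frobenius k p)
  simp only [frobenius_def] at hπ hb
  let E : (σ → Fin p) → (σ →₀ ℕ) := fun a => Finsupp.equivFunOnFinite.symm fun i => (a i : ℕ)
  have hE : ∀ a i, E a i < p := fun a i => (a i).2
  have hEinj : ∀ a a', E a = E a' ↔ a = a' := by
    refine fun a a' => ⟨fun h => ?_, fun h => by rw [h]⟩
    funext i
    exact Fin.ext (DFunLike.congr_fun h i)
  -- The finite set of basis indices may be enlarged, so that the decomposition is additive in `s`.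
  have key : ∀ s : MvPolynomial σ k, ∃ T : Finset ι, ∀ T', T ⊆ T' →
      ∑ i ∈ T', ∑ a, cartier p (E a) (π i) s ^ p * monomial (E a) (b i) = s := by
    intro s
    induction s using MvPolynomial.induction_on' with
    | monomial t d =>
      obtain ⟨T, hT⟩ := hb d
      refine ⟨T, fun T' hTT' => ?_⟩
      let a₀ : σ → Fin p := fun i => ⟨t i % p, Nat.mod_lt _ hp.out.pos⟩
      let u : σ →₀ ℕ := Finsupp.equivFunOnFinite.symm fun i => t i / p
      have ht : t = p • u + E a₀ := by
        ext i
        exact (Nat.div_add_mod (t i) p).symm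
      have h1 : ∀ i, ∑ a, cartier p (E a) (π i) (monomial t d) ^ p * monomial (E a) (b i)
          = monomial t (π i d ^ p * b i) := by
        intro i
        rw [Finset.sum_eq_single a₀]
        · conv_lhs => rw [ht]
          rw [cartier_monomial (hE _) (hE _), if_pos rfl, monomial_pow, monomial_mul, ← ht]
        · intro a _ ha
          conv_lhs => rw [ht]
          rw [cartier_monomial (hE _) (hE _), if_neg (by rwa [hEinj]), zero_pow hp.out.ne_zero,
            zero_mul]
        · simp
      simp_rw [h1]
      rw [← map_sum, hT T' hTT']
    | add x y hx hy =>
      obtain ⟨T, hT⟩ := hx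
      obtain ⟨S, hS⟩ := hy
      refine ⟨T ∪ S, fun T' h' => ?_⟩
      simp_rw [map_add, add_pow_char, add_mul, Finset.sum_add_distrib]
      rw [hT T' (Finset.union_subset_left h'), hS T' (Finset.union_subset_right h')]
  obtain ⟨T, hT⟩ := key s
  rw [← hT T subset_rfl]
  refine Ideal.sum_mem _ fun i _ => Ideal.sum_mem _ fun a _ => Ideal.mul_mem_right _ _ ?_
  exact Ideal.subset_span ⟨_, h _ (isCartier_cartier (hE a) (hπ i)), rfl⟩

lemma mem_bracketPow_iff_s12 [Finite σ] [CharP k p] {s : MvPolynomial σ k}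
    {J : Ideal (MvPolynomial σ k)} :
    s ∈ bracketPow J p ↔
      ∀ φ : MvPolynomial σ k →+ MvPolynomial σ k, IsCartier p φ → φ s ∈ J :=
  ⟨fun h _ hφ => hφ.mem h, mem_bracketPow_of_cartier⟩

lemma testIdeal_one_eq [Finite σ] [CharP k p] (f : MvPolynomial σ k) :
    testIdeal p f 1 = Ideal.span {x | ∃ φ : MvPolynomial σ k →+ MvPolynomial σ k,
      IsCartier p φ ∧ φ (f ^ (p - 1)) = x} := by
  unfold testIdeal
  simp only [pow_one, mem_bracketPow_iff_s12]
  apply le_antisymm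
  · exact sInf_le fun φ hφ => Ideal.subset_span ⟨φ, hφ, rfl⟩
  · refine le_sInf fun a ha => Ideal.span_le.2 ?_
    rintro _ ⟨φ, hφ, rfl⟩
    exact ha φ hφ

lemma bracketPow_pow_succ {A : Type*} [CommRing A] [CharP A p] (I : Ideal A) (e : ℕ) :
    bracketPow I (p ^ (e + 1)) = bracketPow (bracketPow I (p ^ e)) p := by
  have h : ∀ (J : Ideal A) (d : ℕ), bracketPow J (p ^ d) = J.map (iterateFrobenius A p d) :=
    fun _ _ => rfl
  have h1 : ∀ J : Ideal A, bracketPow J p = J.map (frobenius A p) := fun _ => rfl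
  rw [h1, h, h, Ideal.map_map]
  congr 1
  ext x
  simp [iterateFrobenius_def, frobenius_def, pow_succ, pow_mul]

end

/-- For `f ∈ R`, `τ = τ(f^{1−1/p})`, every `g ∈ R` and every `e ≥ 0`:
`f^{p−1}·g^p ∈ m^{[e+1]}` iff `g ∈ (m^{[e]} : τ)`. -/
theorem mul_pow_mem_bracketPow_iff {k : Type*} [Field k] {p n : ℕ}
    [Fact p.Prime] [CharP k p]
    (f g : MvPolynomial (Fin (n + 1)) k) (e : ℕ) :
    f ^ (p - 1) * g ^ p ∈ bracketPow (mxI k n) (p ^ (e + 1)) ↔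
      g ∈ (bracketPow (mxI k n) (p ^ e)).colon (testIdeal p f 1) := by
  rw [bracketPow_pow_succ, mem_bracketPow_iff_s12, testIdeal_one_eq, Submodule.mem_colon]
  set J := bracketPow (mxI k n) (p ^ e)
  have hφg : ∀ φ : MvPolynomial (Fin (n + 1)) k →+ MvPolynomial (Fin (n + 1)) k,
      IsCartier p φ → φ (f ^ (p - 1) * g ^ p) = g * φ (f ^ (p - 1)) := by
    intro φ hφ
    rw [mul_comm, hφ]
  constructor
  · intro h x hx
    rw [smul_eq_mul]
    refine Submodule.span_induction (p := fun x _ => g * x ∈ J) ?_ ?_ ?_ ?_ hx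
    · rintro _ ⟨φ, hφ, rfl⟩
      rw [← hφg φ hφ]
      exact h φ hφ
    · simp
    · intro x y _ _ hx hy
      rw [mul_add]
      exact J.add_mem hx hy
    · intro c x _ hx
      rw [smul_eq_mul, mul_left_comm]
      exact J.mul_mem_left _ hx
  · intro h φ hφ
    rw [hφg φ hφ]
    exact h _ (Ideal.subset_span ⟨φ, hφ, rfl⟩)

end
end

section
/- Let f ∈ R be homogeneous of degree d. Then the test ideal τ(f^{1−1/p}) is generated by homogeneous elements g satisfying p·deg(g) ≤ (p−1)d. (Concretely, writing f^{p−1} = Σ f_{i,b}^p λ_b x^{\underline{i}} over an R^p-basis {λ_b x^{\underline{i}}} of R with 0 ≤ i_j ≤ p−1 and {λ_b} a basis of k over k^p, the homogeneous components of the coefficients f_{i,b} generate τ(f^{1−1/p}) and each satisfies p·deg(f_{i,b}) + |\underline{i}| = (p−1)d.) -/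
/-!
`R = k[x_0, …, x_n]` is free over `R^p` on the elements `λ_b x^i`, where `0 ≤ i_j < p` and `(λ_b)`
is a basis of `k` over `k^p`. The coefficients of `g = f^{p-1}` in this basis have the form
`Φ(g)^p`, where `Φ = cartierOp p ψ i` comes from a `p⁻¹`-linear map `ψ : k → k` and an exponent `i`.
The test ideal is generated by all `Φ(g)`:

* each `Φ` satisfies `Φ(u^p r) = u Φ(r)`, hence maps `a^{[1]}` into `a`, so every ideal `a` with
  `g ∈ a^{[1]}` contains all `Φ(g)` (`cartierOp_mem_of_mem_bracketPow`);
* conversely the expansion of `g` in the basis shows `g ∈ a^{[1]}` for the ideal `a` generated by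
  the `Φ(g)` (`mem_bracketPow_of_cartierOp_mem`).

The generating set uses all `p⁻¹`-linear `ψ`, not only the roots of coordinate functions of one
basis; this gives the same ideal. Finally, if `g` is homogeneous of degree `D` then `Φ(g)` is
homogeneous of degree `(D - |i|)/p` (`isHomogeneous_cartierOp`).
-/

open MvPolynomial

noncomputable section

/-- The Cartier-type operator `Φ_{ψ,i}` attached to an additive map `ψ : k → k` and an exponent `i`:
it sends `c x^m` to `ψ(c) x^{(m - i)/p}` if `i` is the componentwise remainder of `m` modulo `p`,
and to `0` otherwise. For `ψ = (coordinate along λ_b)^{1/p}` it extracts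
the coefficient `f_{i,b}` of `λ_b x^i` in the `R^p`-basis expansion. -/
def cartierOp {σ k : Type*} [Field k] (p : ℕ) (ψ : k →+ k) (i : σ →₀ ℕ) :
    MvPolynomial σ k →+ MvPolynomial σ k :=
  (Finsupp.liftAddHom fun m : σ →₀ ℕ =>
    open Classical in
    if m.mapRange (· % p) (Nat.zero_mod p) = i then
      (monomial (m.mapRange (· / p) (Nat.zero_div p))).toAddMonoidHom.comp ψ
    else 0).comp AddMonoidAlgebra.coeffAddEquiv.toAddMonoidHom

open Classical in
lemma cartierOp_monomial {σ k : Type*} [Field k] (p : ℕ) (ψ : k →+ k) (i m : σ →₀ ℕ) (c : k) :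
    cartierOp p ψ i (monomial m c) =
      if m.mapRange (· % p) (Nat.zero_mod p) = i then
        monomial (m.mapRange (· / p) (Nat.zero_div p)) (ψ c) else 0 := by
  have h : cartierOp p ψ i (monomial m c) =
      (Finsupp.liftAddHom fun m : σ →₀ ℕ =>
        if m.mapRange (· % p) (Nat.zero_mod p) = i then
          (monomial (m.mapRange (· / p) (Nat.zero_div p))).toAddMonoidHom.comp ψ
        else 0) (Finsupp.single m c) := rfl
  rw [h, Finsupp.liftAddHom_apply_single]
  split_ifs <;> rfl

open Classical in
lemma cartierOp_eq_sum {σ k : Type*} [Field k] (p : ℕ) (ψ : k →+ k) (i : σ →₀ ℕ)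
    (g : MvPolynomial σ k) :
    cartierOp p ψ i g = ∑ m ∈ g.support with m.mapRange (· % p) (Nat.zero_mod p) = i,
      monomial (m.mapRange (· / p) (Nat.zero_div p)) (ψ (coeff m g)) := by
  conv_lhs => rw [g.as_sum]
  rw [map_sum, Finset.sum_filter]
  exact Finset.sum_congr rfl fun m _ => cartierOp_monomial p ψ i m _

/-- `Φ_{ψ,i}` is `p⁻¹`-linear over the polynomial ring as soon as `ψ` is so over `k`. -/
lemma cartierOp_pow_mul {σ k : Type*} [Field k] {p : ℕ} [Fact p.Prime] [CharP k p]
    {ψ : k →+ k} (hψ : ∀ x c, ψ (x ^ p * c) = x * ψ c) (i : σ →₀ ℕ)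
    (u r : MvPolynomial σ k) :
    cartierOp p ψ i (u ^ p * r) = u * cartierOp p ψ i r := by
  classical
  have hp : 0 < p := (Fact.out : p.Prime).pos
  induction u using MvPolynomial.induction_on' with
  | add u v hu hv => rw [add_pow_char, add_mul, map_add, hu, hv, add_mul]
  | monomial a c =>
    induction r using MvPolynomial.induction_on' with
    | add r s hr hs => rw [mul_add, map_add, hr, hs, map_add, mul_add]
    | monomial m e =>
      have h1 : (p • a + m).mapRange (· % p) (Nat.zero_mod p) =
          m.mapRange (· % p) (Nat.zero_mod p) := by
        ext j; simp
      have h2 : (p • a + m).mapRange (· / p) (Nat.zero_div p) =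
          a + m.mapRange (· / p) (Nat.zero_div p) := by
        ext j; simp [Nat.mul_add_div hp]
      rw [monomial_pow, monomial_mul, cartierOp_monomial, cartierOp_monomial, h1, h2, hψ]
      split_ifs
      · rw [monomial_mul]
      · rw [mul_zero]

lemma cartierOp_mem_of_mem_bracketPow {σ k : Type*} [Field k] {p : ℕ} [Fact p.Prime] [CharP k p]
    {ψ : k →+ k} (hψ : ∀ x c, ψ (x ^ p * c) = x * ψ c) (i : σ →₀ ℕ)
    {a : Ideal (MvPolynomial σ k)} {g : MvPolynomial σ k} (hg : g ∈ bracketPow a p) :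
    cartierOp p ψ i g ∈ a := by
  unfold bracketPow at hg
  -- `Φ` is only additive, so the induction is over sums of multiples `r * u ^ p`.
  induction hg using Submodule.closure_induction with
  | zero => simp
  | add x y _ _ hx hy => rw [map_add]; exact a.add_mem hx hy
  | smul_mem r x hx =>
    obtain ⟨u, hu, rfl⟩ := hx
    rw [smul_eq_mul, mul_comm, cartierOp_pow_mul hψ]
    exact a.mul_mem_right _ hu

lemma isHomogeneous_cartierOp {σ k : Type*} [Field k] {p : ℕ} (hp : 0 < p) (ψ : k →+ k)
    (i : σ →₀ ℕ) {g : MvPolynomial σ k} {D : ℕ} (hg : g.IsHomogeneous D) :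
    (cartierOp p ψ i g).IsHomogeneous ((D - i.degree) / p) := by
  classical
  rw [cartierOp_eq_sum]
  refine IsHomogeneous.sum _ _ _ fun m hm => isHomogeneous_monomial _ ?_
  obtain ⟨hmg, rfl⟩ := Finset.mem_filter.1 hm
  have hD : m.degree = D := by
    rw [Finsupp.degree_eq_weight_one]; exact hg (mem_support_iff.1 hmg)
  have hdec : m = p • m.mapRange (· / p) (Nat.zero_div p) +
      m.mapRange (· % p) (Nat.zero_mod p) := by
    ext j; simp [Nat.div_add_mod]
  have hdeg := congrArg Finsupp.degree hdec
  rw [map_add, map_nsmul, hD, smul_eq_mul] at hdeg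
  rw [hdeg, Nat.add_sub_cancel, Nat.mul_div_cancel_left _ hp]

/-- A basis `λ` of `k` over `k^p`, with the `p`-th roots `ψ` of its coordinate functions. The basis
may be infinite, so the expansion is stated for finitely many scalars at a time. -/
lemma exists_frobenius_basis.{u} (k : Type u) [Field k] (p : ℕ) [Fact p.Prime] [CharP k p] :
    ∃ (ι : Type u) (ψ : ι → k →+ k) (l : ι → k),
      (∀ b x c, ψ b (x ^ p * c) = x * ψ b c) ∧
      ∀ C : Finset k, ∃ T : Finset ι, ∀ c ∈ C, c = ∑ b ∈ T, ψ b c ^ p * l b := by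
  classical
  let K := (frobenius k p).fieldRange
  let B := Module.Basis.ofVectorSpace K k
  have hroot : ∀ y : K, ∃ x : k, x ^ p = y := fun y => y.2
  choose rt hrt using hroot
  have hinj : Function.Injective fun x : k => x ^ p := frobenius_inj k p
  refine ⟨_, fun b => AddMonoidHom.mk' (fun c => rt (B.repr c b)) fun c e => hinj ?_,
    B, fun b x c => hinj ?_, fun C => ⟨C.biUnion fun c => (B.repr c).support, fun c hc => ?_⟩⟩
  · simp [hrt, add_pow_char]
  · have hx : x ^ p * c = (⟨x ^ p, x, rfl⟩ : K) • c := rfl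
    simp only [AddMonoidHom.mk'_apply, hrt, mul_pow, hx, map_smul]
    rfl
  · conv_lhs => rw [← B.linearCombination_repr c, Finsupp.linearCombination_apply]
    rw [Finsupp.sum_of_support_subset _ (Finset.subset_biUnion_of_mem
      (fun c => (B.repr c).support) hc) _ (by simp)]
    refine Finset.sum_congr rfl fun b _ => ?_
    simp only [AddMonoidHom.mk'_apply, hrt]
    rfl

/-- The expansion `g = Σ_{i,b} Φ_{b,i}(g)^p λ_b x^i` puts `g` into the bracket power of any ideal
containing all the `Φ_{ψ,i}(g)`. -/
lemma mem_bracketPow_of_cartierOp_mem {σ k : Type*} [Field k] {p : ℕ} [Fact p.Prime] [CharP k p]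
    {a : Ideal (MvPolynomial σ k)} {g : MvPolynomial σ k}
    (h : ∀ (ψ : k →+ k) (i : σ →₀ ℕ), (∀ x c, ψ (x ^ p * c) = x * ψ c) → cartierOp p ψ i g ∈ a) :
    g ∈ bracketPow a p := by
  classical
  obtain ⟨ι, ψ, l, hψ, hT⟩ := exists_frobenius_basis k p
  obtain ⟨T, hT⟩ := hT (g.support.image fun m => coeff m g)
  let rem : (σ →₀ ℕ) → (σ →₀ ℕ) := fun m => m.mapRange (· % p) (Nat.zero_mod p)
  have key : g = ∑ b ∈ T, ∑ i ∈ g.support.image rem,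
      monomial i (l b) * cartierOp p (ψ b) i g ^ p := by
    calc g = ∑ m ∈ g.support, monomial m (coeff m g) := g.as_sum
      _ = ∑ m ∈ g.support, ∑ b ∈ T, monomial m (ψ b (coeff m g) ^ p * l b) := by
        refine Finset.sum_congr rfl fun m hm => ?_
        rw [← map_sum, ← hT _ (Finset.mem_image_of_mem _ hm)]
      _ = ∑ b ∈ T, ∑ m ∈ g.support, monomial m (ψ b (coeff m g) ^ p * l b) := Finset.sum_comm
      _ = _ := by
        refine Finset.sum_congr rfl fun b _ => ?_
        rw [← Finset.sum_fiberwise_of_maps_to (g := rem)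
          (fun m hm => Finset.mem_image_of_mem _ hm)]
        refine Finset.sum_congr rfl fun i _ => ?_
        rw [cartierOp_eq_sum, sum_pow_char, Finset.mul_sum]
        refine Finset.sum_congr rfl fun m hm => ?_
        obtain ⟨_, rfl⟩ := Finset.mem_filter.1 hm
        rw [monomial_pow, monomial_mul, mul_comm]
        congr 2
        ext j
        simp [Nat.mod_add_div]
  rw [key]
  exact Ideal.sum_mem _ fun b _ => Ideal.sum_mem _ fun i _ =>
    Ideal.mul_mem_left _ _ (Ideal.subset_span ⟨_, h _ _ (hψ b), rfl⟩)

/-- If `f` is homogeneous of degree `d`, then `τ(f^{1−1/p})` is generated by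
homogeneous elements `g` satisfying `p·deg(g) ≤ (p−1)d`. -/
theorem testIdeal_generated_by_low_degree {k : Type*} [Field k] {p n : ℕ}
    [Fact p.Prime] [CharP k p]
    (f : MvPolynomial (Fin (n + 1)) k) (d : ℕ) (hf : f.IsHomogeneous d) :
    ∃ S : Set (MvPolynomial (Fin (n + 1)) k),
      (∀ g ∈ S, ∃ dg : ℕ, g.IsHomogeneous dg ∧ p * dg ≤ (p - 1) * d) ∧
      Ideal.span S = testIdeal p f 1 := by
  have hp : 0 < p := (Fact.out : p.Prime).pos
  refine ⟨{g | ∃ (ψ : k →+ k) (i : Fin (n + 1) →₀ ℕ),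
    (∀ x c, ψ (x ^ p * c) = x * ψ c) ∧ cartierOp p ψ i (f ^ (p - 1)) = g}, ?_, ?_⟩
  · rintro _ ⟨ψ, i, -, rfl⟩
    have hD : (f ^ (p - 1)).IsHomogeneous ((p - 1) * d) := mul_comm d (p - 1) ▸ hf.pow (p - 1)
    exact ⟨_, isHomogeneous_cartierOp hp ψ i hD,
      (Nat.mul_div_le _ _).trans (Nat.sub_le _ _)⟩
  · simp only [testIdeal, pow_one]
    apply le_antisymm
    · refine le_sInf fun a ha => Ideal.span_le.2 ?_
      rintro _ ⟨ψ, i, hψ, rfl⟩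
      exact cartierOp_mem_of_mem_bracketPow hψ i ha
    · exact sInf_le (mem_bracketPow_of_cartierOp_mem fun ψ i hψ =>
        Ideal.subset_span ⟨ψ, i, hψ, rfl⟩)

end
end
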